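/- Let u : ℝ × ℝ → ℝ be smooth and satisfy u_t = u²·(1 + u_xx) at every point. Then the function Q(t,x) := −2u − 2t·u²·(1 + u_xx) + x·u_x satisfies Q_t = u²·Q_xx + 2u·(1 + u_xx)·Q at every point; that is, Q is a symmetry characteristic of u_t = u²(1 + u_xx). -/

import Mathlib

/-- Partial derivative with respect to the first (time) variable. -/
noncomputable def dt (u : ℝ → ℝ → ℝ) (t x : ℝ) : ℝ := deriv (fun s => u s x) t

/-- `n`-th partial derivative with respect to the second (space) variable. -/
noncomputable def dx (u : ℝ → ℝ → ℝ) (n : ℕ) (t x : ℝ) : ℝ := iteratedDeriv n (u t) x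

def Sm (f : ℝ → ℝ → ℝ) : Prop := ContDiff ℝ (⊤ : ℕ∞) fun p : ℝ × ℝ => f p.1 p.2

/-- first space derivative -/
noncomputable def dX (f : ℝ → ℝ → ℝ) (t x : ℝ) : ℝ := deriv (f t) x

lemma Sm.hasX_aux {f : ℝ → ℝ → ℝ} (hf : Sm f) (t x : ℝ) :
    HasDerivAt (f t) (fderiv ℝ (fun p : ℝ × ℝ => f p.1 p.2) (t, x) (0, 1)) x := by
  have h1 : HasFDerivAt (fun p : ℝ × ℝ => f p.1 p.2) _ (t, x) :=
    (hf.differentiable (by simp) (t, x)).hasFDerivAt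
  have h2 : HasDerivAt (fun y : ℝ => ((t, y) : ℝ × ℝ)) (0, 1) x :=
    (hasDerivAt_const x t).prodMk (hasDerivAt_id x)
  exact h1.comp_hasDerivAt x h2

lemma Sm.hasT_aux {f : ℝ → ℝ → ℝ} (hf : Sm f) (t x : ℝ) :
    HasDerivAt (fun s => f s x) (fderiv ℝ (fun p : ℝ × ℝ => f p.1 p.2) (t, x) (1, 0)) t := by
  have h1 : HasFDerivAt (fun p : ℝ × ℝ => f p.1 p.2) _ (t, x) :=
    (hf.differentiable (by simp) (t, x)).hasFDerivAt
  have h2 : HasDerivAt (fun y : ℝ => ((y, x) : ℝ × ℝ)) (1, 0) t :=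
    (hasDerivAt_id t).prodMk (hasDerivAt_const t x)
  exact h1.comp_hasDerivAt t h2

lemma Sm.dX_eq {f : ℝ → ℝ → ℝ} (hf : Sm f) (t x : ℝ) :
    dX f t x = fderiv ℝ (fun p : ℝ × ℝ => f p.1 p.2) (t, x) (0, 1) := (hf.hasX_aux t x).deriv

lemma Sm.dt_eq {f : ℝ → ℝ → ℝ} (hf : Sm f) (t x : ℝ) :
    dt f t x = fderiv ℝ (fun p : ℝ × ℝ => f p.1 p.2) (t, x) (1, 0) := (hf.hasT_aux t x).deriv

lemma Sm.hasX {f : ℝ → ℝ → ℝ} (hf : Sm f) (t x : ℝ) : HasDerivAt (f t) (dX f t x) x := by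
  rw [hf.dX_eq]; exact hf.hasX_aux t x

lemma Sm.hasT {f : ℝ → ℝ → ℝ} (hf : Sm f) (t x : ℝ) :
    HasDerivAt (fun s => f s x) (dt f t x) t := by
  rw [hf.dt_eq]; exact hf.hasT_aux t x

lemma Sm.fd {f : ℝ → ℝ → ℝ} (hf : Sm f) :
    ContDiff ℝ (⊤ : ℕ∞) (fderiv ℝ (fun p : ℝ × ℝ => f p.1 p.2)) :=
  ContDiff.fderiv_right hf (by simp)

lemma Sm.dX {f : ℝ → ℝ → ℝ} (hf : Sm f) : Sm (dX f) := by
  have : (fun p : ℝ × ℝ => _root_.dX f p.1 p.2) =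
      fun p => fderiv ℝ (fun p : ℝ × ℝ => f p.1 p.2) p (0, 1) := by
    funext p; exact hf.dX_eq p.1 p.2
  unfold Sm
  rw [this]
  exact hf.fd.clm_apply contDiff_const

lemma Sm.dt {f : ℝ → ℝ → ℝ} (hf : Sm f) : Sm (dt f) := by
  have : (fun p : ℝ × ℝ => _root_.dt f p.1 p.2) =
      fun p => fderiv ℝ (fun p : ℝ × ℝ => f p.1 p.2) p (1, 0) := by
    funext p; exact hf.dt_eq p.1 p.2
  unfold Sm
  rw [this]
  exact hf.fd.clm_apply contDiff_const

lemma Sm.swap {f : ℝ → ℝ → ℝ} (hf : Sm f) : _root_.dt (_root_.dX f) = _root_.dX (_root_.dt f) := by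
  funext t x
  have hX : (fun p : ℝ × ℝ => _root_.dX f p.1 p.2) =
      fun p => fderiv ℝ (fun p : ℝ × ℝ => f p.1 p.2) p (0, 1) := by
    funext p; exact hf.dX_eq p.1 p.2
  have hT : (fun p : ℝ × ℝ => _root_.dt f p.1 p.2) =
      fun p => fderiv ℝ (fun p : ℝ × ℝ => f p.1 p.2) p (1, 0) := by
    funext p; exact hf.dt_eq p.1 p.2
  have hd := hf.fd.differentiable (by simp) (t, x)
  have hs : IsSymmSndFDerivAt ℝ (fun p : ℝ × ℝ => f p.1 p.2) (t, x) :=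
    ContDiffAt.isSymmSndFDerivAt (n := ((⊤ : ℕ∞) : WithTop ℕ∞)) (ContDiff.contDiffAt hf)
      (by simp only [minSmoothness_of_isRCLikeNormedField]; exact WithTop.coe_le_coe.2 (le_top : (2 : ℕ∞) ≤ ⊤))
  rw [hf.dX.dt_eq, hf.dt.dX_eq, hX, hT, fderiv_clm_apply hd (by fun_prop),
    fderiv_clm_apply hd (by fun_prop)]
  simpa using hs (1, 0) (0, 1)

lemma dx_one (f : ℝ → ℝ → ℝ) : dx f 1 = dX f := by
  funext t x; simp [dx, dX, iteratedDeriv_one]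

lemma dx_two (f : ℝ → ℝ → ℝ) : dx f 2 = dX (dX f) := by
  funext t x
  simp only [dx, iteratedDeriv_succ, iteratedDeriv_zero]
  rfl

theorem stmt_13 (u : ℝ → ℝ → ℝ) (hu : ContDiff ℝ (⊤ : ℕ∞) fun p : ℝ × ℝ => u p.1 p.2)
    (heq : ∀ t x, dt u t x = (u t x) ^ 2 * (1 + dx u 2 t x))
    (Q : ℝ → ℝ → ℝ)
    (hQ : ∀ t x, Q t x = -2 * u t x - 2 * t * (u t x) ^ 2 * (1 + dx u 2 t x) + x * dx u 1 t x) :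
    ∀ t x, dt Q t x = (u t x) ^ 2 * dx Q 2 t x + 2 * u t x * (1 + dx u 2 t x) * Q t x := by
  intro t x
  have h0 : Sm u := hu
  simp only [dx_two] at heq hQ ⊢
  simp only [dx_one] at hQ
  have ha := h0.dt
  have hB := h0.dX
  have hC := hB.dX
  have hQ' : Q = fun t x => -2 * u t x - 2 * t * dt u t x + x * dX u t x := by
    funext t x; rw [hQ, heq]; ring
  have haX : dX (dt u) t x = 2 * u t x * dX u t x * (1 + dX (dX u) t x)
      + u t x ^ 2 * dX (dX (dX u)) t x := by
    have e : dt u t = fun y => u t y ^ 2 * (1 + dX (dX u) t y) := funext (heq t)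
    have := ((h0.hasX t x).pow 2).mul ((hC.hasX t x).const_add 1)
    unfold dX at *
    rw [e]
    refine (this.deriv).trans ?_
    simp
  have haT : dt (dt u) t x = 2 * u t x * dt u t x * (1 + dX (dX u) t x)
      + u t x ^ 2 * dX (dX (dt u)) t x := by
    have e : (fun s => dt u s x) = fun s => u s x ^ 2 * (1 + dX (dX u) s x) :=
      funext fun s => heq s x
    have h := ((h0.hasT t x).pow 2).mul ((hC.hasT t x).const_add 1)
    rw [hB.swap, h0.swap] at h
    have e2 : dt (dt u) t x = deriv (fun s => dt u s x) t := rfl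
    rw [e2, e]
    refine (h.deriv).trans ?_
    simp
  have hQT : dt Q t x = -2 * dt u t x - 2 * dt u t x - 2 * t * dt (dt u) t x
      + x * dX (dt u) t x := by
    have h := (((h0.hasT t x).const_mul (-2)).sub
      (((hasDerivAt_id t).const_mul 2).mul (ha.hasT t x))).add ((hB.hasT t x).const_mul x)
    rw [h0.swap] at h
    rw [hQ']
    refine (h.deriv).trans ?_
    simp; ring
  have hQX : dX Q = fun t x => - dX u t x - 2 * t * dX (dt u) t x + x * dX (dX u) t x := by
    funext t x
    have h := (((h0.hasX t x).const_mul (-2)).sub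
      ((ha.hasX t x).const_mul (2 * t))).add ((hasDerivAt_id x).mul (hB.hasX t x))
    rw [hQ']
    refine (h.deriv).trans ?_
    simp; ring
  have hQXX : dX (dX Q) t x = - 2 * t * dX (dX (dt u)) t x + x * dX (dX (dX u)) t x := by
    have h := (((hB.hasX t x).neg).sub
      ((ha.dX.hasX t x).const_mul (2 * t))).add ((hasDerivAt_id x).mul (hC.hasX t x))
    rw [hQX]
    refine (h.deriv).trans ?_
    simp; ring
  rw [hQT, hQXX, haT, haX, hQ, heq]
  ring
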